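/- arXiv:0910.3417 — 2 statements merged into one kernel-verified Lean document; each statement's English description precedes it below -/
import Mathlib

section
/- Let q be a prime power with q ≡ 2 (mod 3), let n be a positive integer, and let k be an odd divisor of n. Set T_k = Σ_{i=0}^{n/k−1} t^{q^{ki}} ∈ 𝔽_q[t], F_k = T_k^{(q^k−2)/3} and G_k = T_k^{q^k−1} (note q^k ≡ 2 (mod 3), so (q^k−2)/3 is an integer). Then G_k² − G_k = (t^{q^n}−t)·F_k³ in 𝔽_q[t], the formal derivative G_k′ is nonzero, and deg G_k = q^n − q^{n−k}, so that for distinct odd divisors k ≠ k′ of n the separable ∞-integral points (F_k, G_k) and (F_{k′}, G_{k′}) of the cubic twist y² − y = (t^{q^n}−t)x³ are distinct. -/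
open Polynomial

/-- The trace polynomial `T_k = Σ_{i=0}^{n/k-1} t^(q^(k*i))` over `𝔽_q`. -/
noncomputable def tracePoly (Fq : Type*) [Field Fq] [Fintype Fq] (n k : ℕ) : Polynomial Fq :=
  ∑ i ∈ Finset.range (n / k), X ^ (Fintype.card Fq) ^ (k * i)

/-- `F_k = T_k ^ ((q^k - 2)/3)`. -/
noncomputable def Fcub (Fq : Type*) [Field Fq] [Fintype Fq] (n k : ℕ) : Polynomial Fq :=
  tracePoly Fq n k ^ ((Fintype.card Fq ^ k - 2) / 3)

/-- `G_k = T_k ^ (q^k - 1)`. -/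
noncomputable def Gcub (Fq : Type*) [Field Fq] [Fintype Fq] (n k : ℕ) : Polynomial Fq :=
  tracePoly Fq n k ^ (Fintype.card Fq ^ k - 1)

section TracePoly

variable {Fq : Type*} [Field Fq] [Fintype Fq]

theorem tracePoly_pow_card_sub_self {n k : ℕ} (hkn : k ∣ n) :
    tracePoly Fq n k ^ (Fintype.card Fq ^ k) - tracePoly Fq n k
      = X ^ (Fintype.card Fq ^ n) - X := by
  obtain ⟨p, hp⟩ := CharP.exists Fq
  obtain ⟨e, hprime, he⟩ := FiniteField.card Fq p
  have : Fact p.Prime := ⟨hprime⟩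
  have hfrob : tracePoly Fq n k ^ (Fintype.card Fq ^ k)
      = ∑ i ∈ Finset.range (n / k), X ^ Fintype.card Fq ^ (k * (i + 1)) := by
    rw [tracePoly, he, ← pow_mul, sum_pow_char_pow]
    refine Finset.sum_congr rfl fun i _ => ?_
    rw [← pow_mul X, ← pow_mul p, ← pow_mul p, ← pow_add, mul_add_one, mul_add]
  rw [hfrob, tracePoly, ← Finset.sum_sub_distrib,
    Finset.sum_range_sub (fun i => (X : Fq[X]) ^ Fintype.card Fq ^ (k * i)),
    Nat.mul_div_cancel' hkn]
  simp

theorem derivative_tracePoly {n k : ℕ} (hn : n ≠ 0) (hk : k ≠ 0) (hkn : k ∣ n) :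
    derivative (tracePoly Fq n k) = 1 := by
  have h := congrArg derivative (tracePoly_pow_card_sub_self (Fq := Fq) hkn)
  simpa [derivative_pow, hn, hk] using h

theorem natDegree_sum_range_X_pow_pow {R : Type*} [Semiring R] [Nontrivial R] {Q : ℕ}
    (hQ : 1 < Q) (m : ℕ) :
    (∑ i ∈ Finset.range (m + 1), (X : R[X]) ^ Q ^ i).natDegree = Q ^ m := by
  induction m with
  | zero => simp
  | succ m ih =>
    rw [Finset.sum_range_succ, natDegree_add_eq_right_of_natDegree_lt, natDegree_X_pow]
    rw [ih, natDegree_X_pow]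
    exact Nat.pow_lt_pow_right hQ m.lt_succ_self

theorem natDegree_tracePoly {n k : ℕ} (hn : n ≠ 0) (hk : k ≠ 0) (hkn : k ∣ n) :
    (tracePoly Fq n k).natDegree = Fintype.card Fq ^ (n - k) := by
  obtain ⟨m, rfl⟩ := hkn
  obtain ⟨m, rfl⟩ := Nat.exists_eq_succ_of_ne_zero (right_ne_zero_of_mul hn)
  have hQ : 1 < Fintype.card Fq ^ k := Nat.one_lt_pow hk Fintype.one_lt_card
  have hsub : k * (m + 1) - k = k * m := by rw [mul_add_one, Nat.add_sub_cancel]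
  rw [tracePoly, Nat.mul_div_cancel_left _ (Nat.pos_of_ne_zero hk), Nat.succ_eq_add_one, hsub]
  simp only [pow_mul (Fintype.card Fq)]
  exact natDegree_sum_range_X_pow_pow hQ m

theorem natDegree_Gcub {n k : ℕ} (hn : n ≠ 0) (hk : k ≠ 0) (hkn : k ∣ n) :
    (Gcub Fq n k).natDegree = Fintype.card Fq ^ n - Fintype.card Fq ^ (n - k) := by
  rw [Gcub, natDegree_pow, natDegree_tracePoly hn hk hkn, tsub_mul, one_mul, ← pow_add,
    Nat.add_sub_cancel' (Nat.le_of_dvd (Nat.pos_of_ne_zero hn) hkn)]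

theorem derivative_Gcub_ne_zero {n k : ℕ} (hn : n ≠ 0) (hk : k ≠ 0) (hkn : k ∣ n) :
    derivative (Gcub Fq n k) ≠ 0 := by
  have hT : tracePoly Fq n k ≠ 0 := fun h => by
    simpa [h] using derivative_tracePoly (Fq := Fq) hn hk hkn
  have hcast : ((Fintype.card Fq ^ k - 1 : ℕ) : Fq) = -1 := by
    rw [Nat.cast_sub (Nat.one_le_pow _ _ Fintype.card_pos)]
    simp [hk]
  rw [Gcub, derivative_pow, derivative_tracePoly hn hk hkn, hcast]
  simp [hT]

theorem pow_mod_three_of_odd {q k : ℕ} (hq : q % 3 = 2) (hk : Odd k) : q ^ k % 3 = 2 := by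
  obtain ⟨j, rfl⟩ := hk
  have h4 : (4 : ℕ) ^ j % 3 = 1 := by simp [Nat.pow_mod]
  rw [Nat.pow_mod, hq, pow_succ, pow_mul, Nat.mul_mod]
  norm_num [h4]

theorem Gcub_sq_sub_self {n k : ℕ} (hq : Fintype.card Fq % 3 = 2) (hkn : k ∣ n) (hk : Odd k) :
    Gcub Fq n k ^ 2 - Gcub Fq n k
      = (X ^ (Fintype.card Fq ^ n) - X) * Fcub Fq n k ^ 3 := by
  have hmod := pow_mod_three_of_odd hq hk
  rw [← tracePoly_pow_card_sub_self hkn, Gcub, Fcub]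
  generalize Fintype.card Fq ^ k = Q at hmod ⊢
  obtain ⟨r, rfl⟩ : ∃ r, Q = 3 * r + 2 := ⟨Q / 3, by lia⟩
  rw [show 3 * r + 2 - 1 = 3 * r + 1 by lia, show (3 * r + 2 - 2) / 3 = r by lia]
  ring

theorem eq_of_Gcub_eq {n k k' : ℕ} (hn : n ≠ 0) (hk : k ≠ 0) (hk' : k' ≠ 0) (hkn : k ∣ n)
    (hkn' : k' ∣ n) (h : Gcub Fq n k = Gcub Fq n k') : k = k' := by
  have hdeg := congrArg natDegree h
  rw [natDegree_Gcub hn hk hkn, natDegree_Gcub hn hk' hkn'] at hdeg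
  have hle (j : ℕ) : Fintype.card Fq ^ (n - j) ≤ Fintype.card Fq ^ n :=
    Nat.pow_le_pow_right Fintype.card_pos (Nat.sub_le n j)
  have hpow : Fintype.card Fq ^ (n - k) = Fintype.card Fq ^ (n - k') := by
    have := hle k
    have := hle k'
    lia
  have hexp := Nat.pow_right_injective (Fintype.one_lt_card (α := Fq)) hpow
  have := Nat.le_of_dvd (Nat.pos_of_ne_zero hn) hkn
  have := Nat.le_of_dvd (Nat.pos_of_ne_zero hn) hkn'
  lia

end TracePoly

theorem stmt1 (Fq : Type*) [Field Fq] [Fintype Fq]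
    (hq : Fintype.card Fq % 3 = 2) (n : ℕ) (hn : 0 < n) :
    (∀ k, k ∣ n → Odd k →
      Gcub Fq n k ^ 2 - Gcub Fq n k
          = (X ^ (Fintype.card Fq ^ n) - X) * Fcub Fq n k ^ 3 ∧
        derivative (Gcub Fq n k) ≠ 0 ∧
        (Gcub Fq n k).natDegree = Fintype.card Fq ^ n - Fintype.card Fq ^ (n - k)) ∧
    (∀ k k', k ∣ n → k' ∣ n → Odd k → Odd k' → k ≠ k' →
      (Fcub Fq n k, Gcub Fq n k) ≠ (Fcub Fq n k', Gcub Fq n k')) := by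
  refine ⟨fun k hkn hk => ⟨Gcub_sq_sub_self hq hkn hk,
    derivative_Gcub_ne_zero hn.ne' hk.pos.ne' hkn, natDegree_Gcub hn.ne' hk.pos.ne' hkn⟩, ?_⟩
  intro k k' hkn hkn' hk hk' hne heq
  exact hne (eq_of_Gcub_eq hn.ne' hk.pos.ne' hk'.pos.ne' hkn hkn' (Prod.ext_iff.mp heq).2)
end

section
/- Let q be a prime power with q ≡ 3 (mod 4), let k₁, …, k_n be distinct odd positive integers, and let A₀ = Σ_j a_j t^j ∈ 𝔽_q[t] be a polynomial with nonzero constant term such that t^{k_i} − 1 divides A₀ in 𝔽_q[t] for every i = 1, …, n. Let A = Σ_j a_j t^{q^j} be the associated 𝔽_q-additive polynomial. Then there exist n pairwise distinct pairs (F_1,G_1), …, (F_n,G_n) ∈ 𝔽_q[t] × 𝔽_q[t] such that for each i, A·G_i² = F_i³ − F_i and F_i′ ≠ 0; that is, the quadratic twist A(t)·y² = x³ − x has at least n separable ∞-integral points (lying in distinct Frobenius orbits). -/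
open Polynomial

section AdditivePolynomial

variable {K : Type*} [Field K] [Fintype K]

/-- The linear map sending `∑ a_j t^j` to the additive polynomial `∑ a_j t^(q^j)`, where `q = #K`. -/
noncomputable def associatedAdditive : K[X] →ₗ[K] K[X] :=
  Polynomial.lsum fun j => Polynomial.monomial (Fintype.card K ^ j)

theorem associatedAdditive_monomial (j : ℕ) (a : K) :
    associatedAdditive (monomial j a) = monomial (Fintype.card K ^ j) a := by
  simp [associatedAdditive, Polynomial.lsum_apply, Polynomial.sum_monomial_index]

theorem associatedAdditive_eq_sum_range (f : K[X]) :
    associatedAdditive f = ∑ j ∈ Finset.range (f.natDegree + 1),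
      C (f.coeff j) * X ^ (Fintype.card K) ^ j := by
  conv_lhs => rw [f.as_sum_range]
  simp [associatedAdditive_monomial, C_mul_X_pow_eq_monomial]

theorem associatedAdditive_X_mul (f : K[X]) :
    associatedAdditive (X * f) = associatedAdditive f ^ Fintype.card K := by
  rw [← FiniteField.expand_card]
  induction f using Polynomial.induction_on' with
  | add f g hf hg => simp [mul_add, hf, hg]
  | monomial j a =>
    rw [X_mul_monomial, associatedAdditive_monomial, associatedAdditive_monomial,
      expand_monomial, pow_succ]

theorem associatedAdditive_X_pow_mul (k : ℕ) (f : K[X]) :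
    associatedAdditive (X ^ k * f) = associatedAdditive f ^ Fintype.card K ^ k := by
  induction k with
  | zero => simp
  | succ k ih => rw [pow_succ', mul_assoc, associatedAdditive_X_mul, ih, pow_succ, pow_mul]

theorem derivative_associatedAdditive (f : K[X]) :
    derivative (associatedAdditive f) = C (f.coeff 0) := by
  induction f using Polynomial.induction_on' with
  | add f g hf hg => simp [hf, hg]
  | monomial j a =>
    rw [associatedAdditive_monomial, derivative_monomial]
    cases j <;> simp [coeff_monomial]

theorem associatedAdditive_X_pow_sub_one_mul (k : ℕ) (f : K[X]) :
    associatedAdditive ((X ^ k - 1) * f) =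
      associatedAdditive f ^ Fintype.card K ^ k - associatedAdditive f := by
  rw [sub_mul, one_mul, map_sub, associatedAdditive_X_pow_mul]

end AdditivePolynomial

theorem Nat.pow_mod_four_eq_three {q k : ℕ} (hq : q % 4 = 3) (hk : Odd k) : q ^ k % 4 = 3 := by
  obtain ⟨m, rfl⟩ := hk
  rw [pow_succ, pow_mul, Nat.mul_mod, Nat.pow_mod, Nat.pow_mod q, hq]
  norm_num [Nat.pow_mod]

theorem natDegree_pow_sub_self {R : Type*} [CommRing R] [IsDomain R] {B : R[X]} {m : ℕ}
    (hB : B.natDegree ≠ 0) (hm : 1 < m) : (B ^ m - B).natDegree = m * B.natDegree := by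
  rw [natDegree_sub_eq_left_of_natDegree_lt, natDegree_pow]
  rw [natDegree_pow]
  exact lt_mul_of_one_lt_left (Nat.pos_of_ne_zero hB) hm

theorem stmt2 (Fq : Type*) [Field Fq] [Fintype Fq]
    (hq : Fintype.card Fq % 4 = 3)
    (n : ℕ) (k : Fin n → ℕ) (hodd : ∀ i, Odd (k i)) (hinj : Function.Injective k)
    (A₀ : Polynomial Fq) (hA₀ : A₀.coeff 0 ≠ 0)
    (hdvd : ∀ i, (X ^ (k i) - 1 : Polynomial Fq) ∣ A₀)
    (A : Polynomial Fq)
    (hA : A = ∑ j ∈ Finset.range (A₀.natDegree + 1),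
      C (A₀.coeff j) * X ^ (Fintype.card Fq) ^ j) :
    ∃ P : Fin n → Polynomial Fq × Polynomial Fq, Function.Injective P ∧
      ∀ i, A * (P i).2 ^ 2 = (P i).1 ^ 3 - (P i).1 ∧ derivative (P i).1 ≠ 0 := by
  rw [← associatedAdditive_eq_sum_range] at hA
  choose B₀ hB₀ using hdvd
  set B := fun i => associatedAdditive (B₀ i) with hB
  have hAB (i) : A = B i ^ Fintype.card Fq ^ k i - B i := by
    rw [hA, ← associatedAdditive_X_pow_sub_one_mul, ← hB₀ i]
  have hB' (i) : derivative (B i) ≠ 0 := by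
    rw [hB, derivative_associatedAdditive, Ne, C_eq_zero]
    intro h
    apply hA₀
    rw [hB₀ i, mul_coeff_zero, h, mul_zero]
  have hBdeg (i) : (B i).natDegree ≠ 0 := fun h =>
    hB' i (by rw [eq_C_of_natDegree_eq_zero h, derivative_C])
  have hBne (i) : B i ≠ 0 := fun h => hBdeg i (by rw [h, natDegree_zero])
  -- `#Fq ^ k i = 4 * r i + 3`
  have hr (i) : ∃ r, Fintype.card Fq ^ k i = 4 * r + 3 :=
    ⟨Fintype.card Fq ^ k i / 4, by have := Nat.pow_mod_four_eq_three hq (hodd i); omega⟩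
  choose r hr using hr
  refine ⟨fun i => (B i ^ (2 * r i + 1), B i ^ r i), fun i j hij => ?_, fun i => ⟨?_, ?_⟩⟩
  · have hF : (2 * r i + 1) * (B i).natDegree = (2 * r j + 1) * (B j).natDegree := by
      simpa only [natDegree_pow] using congrArg natDegree (congrArg Prod.fst hij)
    have hdegA (i) : A.natDegree = (4 * r i + 3) * (B i).natDegree := by
      rw [hAB i, hr i, natDegree_pow_sub_self (hBdeg i) (by omega)]
    have hdeg := (hdegA i).symm.trans (hdegA j)
    have hBij : (B i).natDegree = (B j).natDegree := by linarith
    rw [hBij] at hF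
    have hrij := Nat.eq_of_mul_eq_mul_right (Nat.pos_of_ne_zero (hBdeg j)) hF
    apply hinj
    apply Nat.pow_right_injective (a := Fintype.card Fq) (by omega)
    simp only [hr]
    omega
  · simp only
    rw [hAB i, hr i]
    ring
  · simp only
    have hcast : (4 * r i + 3 : Fq) = 0 := by
      have h : ((Fintype.card Fq ^ k i : ℕ) : Fq) = 0 := by
        rw [Nat.cast_pow, FiniteField.cast_card_eq_zero, zero_pow (hodd i).pos.ne']
      rw [hr i] at h
      exact_mod_cast h
    rw [derivative_pow]
    refine mul_ne_zero (mul_ne_zero ?_ (pow_ne_zero _ (hBne i))) (hB' i)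
    rw [Ne, C_eq_zero]
    intro h
    push_cast at h
    exact one_ne_zero (α := Fq) (by linear_combination hcast - 2 * h)
end
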